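/- arXiv:2409.13161 — 6 statements merged into one kernel-verified Lean document; each statement's English description precedes it below -/
import Mathlib

section
/- Let G be a 2K2-free finite simple graph and suppose V(G) is partitioned into independent sets A_1, A_2, …, A_i such that A_1 is an inclusion-wise maximal independent set of G. Then for each j ∈ {2, …, i}, A_1 contains a vertex that is adjacent to every vertex of A_j. -/
/-- A graph is `2K₂`-free if it has no induced subgraph isomorphic to `2K₂`
(two vertex-disjoint edges with no edges between them). -/
def TwoK2Free {V : Type*} (G : SimpleGraph V) : Prop :=
  ¬ ∃ a b c d : V, G.Adj a b ∧ G.Adj c d ∧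
      ¬ G.Adj a c ∧ ¬ G.Adj a d ∧ ¬ G.Adj b c ∧ ¬ G.Adj b d

/-!
Let `S` and `T` be independent sets of a `2K₂`-free graph. The traces on `T` of the neighbourhoods
of the vertices of `S` form a chain under inclusion, since vertices witnessing that two traces are
incomparable would induce a `2K₂`. If `S` is maximal and disjoint from `T`, these traces cover `T`,
and a finite set covered by a nonempty chain of sets lies in a single member of the chain.
-/

section

variable {V : Type*} {G : SimpleGraph V} {S T : Set V}

theorem isIndepSet_iff_forall_not_adj :
    G.IsIndepSet S ↔ ∀ a ∈ S, ∀ b ∈ S, ¬ G.Adj a b :=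
  ⟨fun hS _ ha _ hb hab => hS ha hb hab.ne hab, fun hS _ ha _ hb _ => hS _ ha _ hb⟩

theorem exists_adj_of_maximal_isIndepSet (hS : Maximal G.IsIndepSet S) {v : V} (hv : v ∉ S) :
    ∃ x ∈ S, G.Adj x v := by
  by_contra! hnonadj
  have hinsert : G.IsIndepSet (insert v S) :=
    hS.prop.insert fun x hx _ => ⟨fun hvx => hnonadj x hx hvx.symm, hnonadj x hx⟩
  exact hv (hS.mem_of_prop_insert hinsert)

theorem nonempty_of_maximal_isIndepSet [Nonempty V] (hS : Maximal G.IsIndepSet S) :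
    S.Nonempty := by
  obtain ⟨v⟩ := ‹Nonempty V›
  by_cases hv : v ∈ S
  · exact ⟨v, hv⟩
  · obtain ⟨x, hx, -⟩ := exists_adj_of_maximal_isIndepSet hS hv
    exact ⟨x, hx⟩

theorem TwoK2Free.isChain_image_neighborSet_inter (hG : TwoK2Free G) (hS : G.IsIndepSet S)
    (hT : G.IsIndepSet T) : IsChain (· ⊆ ·) ((fun x => G.neighborSet x ∩ T) '' S) := by
  rw [isIndepSet_iff_forall_not_adj] at hS hT
  rintro _ ⟨x, hx, rfl⟩ _ ⟨x', hx', rfl⟩ -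
  by_contra! hincomparable
  obtain ⟨y, ⟨hxy, hy⟩, hy_notMem⟩ := Set.not_subset.mp hincomparable.1
  obtain ⟨y', ⟨hx'y', hy'⟩, hy'_notMem⟩ := Set.not_subset.mp hincomparable.2
  have hx'y : ¬ G.Adj x' y := fun h => hy_notMem ⟨h, hy⟩
  have hxy' : ¬ G.Adj x y' := fun h => hy'_notMem ⟨h, hy'⟩
  exact hG ⟨x, y, x', y', hxy, hx'y', hS x hx x' hx', hxy', fun h => hx'y h.symm, hT y hy y' hy'⟩

theorem stmt0_general [Nonempty V] (hG : TwoK2Free G) (hS : Maximal G.IsIndepSet S)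
    (hT : G.IsIndepSet T) (hST : Disjoint S T) (hTfin : T.Finite) :
    ∃ x ∈ S, ∀ y ∈ T, G.Adj x y := by
  have hcover : T ⊆ ⋃₀ ((fun x => G.neighborSet x ∩ T) '' S) := fun y hy =>
    have ⟨x, hx, hxy⟩ := exists_adj_of_maximal_isIndepSet hS (hST.notMem_of_mem_right hy)
    ⟨_, ⟨x, hx, rfl⟩, hxy, hy⟩
  have hchain := hG.isChain_image_neighborSet_inter hS.prop hT
  have hnonempty := (nonempty_of_maximal_isIndepSet hS).image fun x => G.neighborSet x ∩ T
  obtain ⟨_, ⟨x, hx, rfl⟩, hTx⟩ :=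
    hchain.directedOn.exists_mem_subset_of_finite_of_subset_sUnion hnonempty hTfin hcover
  exact ⟨x, hx, fun y hy => (hTx hy).1⟩

end

/-- If a 2K₂-free graph has its vertex set partitioned into independent
sets `A 0, A 1, …, A m` with `A 0` inclusion-wise maximal, then for each `j ≠ 0`
there is a vertex of `A 0` adjacent to every vertex of `A j`. -/
theorem stmt0 {V : Type*} [Fintype V] [Nonempty V] (G : SimpleGraph V)
    (hG : TwoK2Free G) (m : ℕ) (A : Fin (m+1) → Set V)
    (hcover : ∀ v : V, ∃ j, v ∈ A j)
    (hdisj : ∀ j j' : Fin (m+1), j ≠ j' → Disjoint (A j) (A j'))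
    (hindep : ∀ j, ∀ a ∈ A j, ∀ b ∈ A j, ¬ G.Adj a b)
    (hmax : ∀ S : Set V, A 0 ⊆ S → (∀ a ∈ S, ∀ b ∈ S, ¬ G.Adj a b) → S = A 0) :
    ∀ j : Fin (m+1), j ≠ 0 → ∃ x ∈ A 0, ∀ y ∈ A j, G.Adj x y := by
  simp only [← isIndepSet_iff_forall_not_adj] at hindep hmax
  exact fun j hj => stmt0_general hG ⟨hindep 0, fun S hS hle => (hmax S hle hS).le⟩ (hindep j)
    (hdisj 0 j hj.symm) (A j).toFinite
end

section
/- For every integer q ≥ 2, the graph MEbar_q is C4-free. -/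
/-- A graph is `C₄`-free if it has no induced subgraph isomorphic to the 4-cycle. -/
def C4Free {V : Type*} (G : SimpleGraph V) : Prop :=
  ¬ ∃ a b c d : V, a ≠ c ∧ b ≠ d ∧ G.Adj a b ∧ G.Adj b c ∧ G.Adj c d ∧ G.Adj d a ∧
      ¬ G.Adj a c ∧ ¬ G.Adj b d

/-- The graph `MEbar_q`.  The vertices `0, 1, …, q+1` of `Fin (4q+2)` are
`u_0, …, u_{q+1}` and, for `1 ≤ i ≤ q`, the vertices `q+3i-1, q+3i, q+3i+1` are
`v_{i1}, v_{i2}, v_{i3}`; listed in this order the vertices form a Hamiltonian cycle,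
and the extra edges are `u_i v_{i2}` and `v_{i1} v_{i3}` for `1 ≤ i ≤ q`. -/
def MEbar (q : ℕ) : SimpleGraph (Fin (4*q+2)) :=
  SimpleGraph.fromRel (fun a b =>
    b.val = a.val + 1 ∨ (a.val = 0 ∧ b.val = 4*q+1) ∨
    (∃ i, 1 ≤ i ∧ i ≤ q ∧ a.val = i ∧ b.val = q + 3*i) ∨
    (∃ i, 1 ≤ i ∧ i ≤ q ∧ a.val = q + 3*i - 1 ∧ b.val = q + 3*i + 1))

/-!
For `q ≥ 2` the graph `MEbar_q` has no 4-cycle at all, induced or not. Order the vertices along the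
Hamiltonian cycle. The least vertex `a` of a 4-cycle has two larger neighbours, so besides its
successor it has a neighbour through one of the remaining edges: `a` is `u_0`, some `u_i` with
`1 ≤ i ≤ q`, or some `v_{i1}`. In each case the explicit neighbourhoods show that the two larger
neighbours of `a` have no second common neighbour above `a`.
-/

theorem c4Free_of_commonNeighbors_subsingleton {V : Type*} {G : SimpleGraph V}
    (h : Pairwise fun a c => (G.commonNeighbors a c).Subsingleton) : C4Free G := by
  rintro ⟨a, b, c, d, hac, hbd, hab, hbc, hcd, hda, -, -⟩
  exact hbd (h hac ⟨hab, hbc.symm⟩ ⟨hda.symm, hcd⟩)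

theorem pairwise_commonNeighbors_subsingleton_of_lt {V : Type*} [LinearOrder V] {G : SimpleGraph V}
    (h : ∀ ⦃a b c d : V⦄, a < b → b < d → a < c → G.Adj a b → G.Adj a d → G.Adj b c →
      ¬ G.Adj d c) :
    Pairwise fun a c => (G.commonNeighbors a c).Subsingleton := by
  have no_cycle_above {a b c d : V} (hab : a < b) (had : a < d) (hac : a < c) (hbd : b ≠ d)
      (Hab : G.Adj a b) (Hbc : G.Adj b c) (Hcd : G.Adj c d) (Hda : G.Adj d a) : False := by
    rcases hbd.lt_or_gt with hbd | hdb
    · exact h hab hbd hac Hab Hda.symm Hbc Hcd.symm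
    · exact h had hdb hac Hda.symm Hab Hcd.symm Hbc
  rintro a c hac b ⟨Hab, Hcb⟩ d ⟨Had, Hcd⟩
  simp only [SimpleGraph.mem_neighborSet] at Hab Hcb Had Hcd
  by_contra hbd
  have least : (a < b ∧ a < d ∧ a < c) ∨ (b < c ∧ b < a ∧ b < d) ∨
      (c < d ∧ c < b ∧ c < a) ∨ (d < a ∧ d < c ∧ d < b) := by
    grind [Hab.ne, Hcb.ne, Had.ne, Hcd.ne]
  rcases least with ⟨hb, hd, hc⟩ | ⟨hc, ha, hd⟩ | ⟨hd, hb, ha⟩ | ⟨ha, hc, hb⟩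
  · exact no_cycle_above hb hd hc hbd Hab Hcb.symm Hcd Had.symm
  · exact no_cycle_above hc ha hd hac.symm Hcb.symm Hcd Had.symm Hab
  · exact no_cycle_above hd hb ha (Ne.symm hbd) Hcd Had.symm Hab Hcb.symm
  · exact no_cycle_above ha hc hb hac Had.symm Hab Hcb.symm Hcd

namespace MEbar

variable {q : ℕ} {a b c d : Fin (4 * q + 2)}

theorem adj_iff_of_lt (hab : a < b) :
    (MEbar q).Adj a b ↔ b.val = a.val + 1 ∨ (a.val = 0 ∧ b.val = 4 * q + 1) ∨
      (1 ≤ a.val ∧ a.val ≤ q ∧ b.val = q + 3 * a.val) ∨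
      ∃ i, 1 ≤ i ∧ a.val + 1 = q + 3 * i ∧ b.val = q + 3 * i + 1 := by
  simp only [MEbar, SimpleGraph.fromRel_adj]
  constructor
  · rintro ⟨-, (h | h | ⟨i, h⟩ | ⟨i, h⟩) | (h | h | ⟨i, h⟩ | ⟨i, h⟩)⟩
    · exact .inl h
    · exact .inr (.inl h)
    · exact .inr (.inr (.inl (by omega)))
    · exact .inr (.inr (.inr ⟨i, by omega⟩))
    all_goals omega
  · rintro (h | h | h | ⟨i, h⟩) <;> refine ⟨hab.ne, .inl ?_⟩
    · exact .inl h
    · exact .inr (.inl h)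
    · exact .inr (.inr (.inl ⟨a, by omega⟩))
    · exact .inr (.inr (.inr ⟨i, by omega⟩))

theorem val_eq_succ_of_adj_of_adj (hab : a < b) (hbd : b < d) (Hab : (MEbar q).Adj a b)
    (Had : (MEbar q).Adj a d) :
    b.val = a.val + 1 ∧ ((a.val = 0 ∧ d.val = 4 * q + 1) ∨
      (1 ≤ a.val ∧ a.val ≤ q ∧ d.val = q + 3 * a.val) ∨
      ∃ i, 1 ≤ i ∧ a.val + 1 = q + 3 * i ∧ d.val = q + 3 * i + 1) := by
  have hb := (adj_iff_of_lt hab).1 Hab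
  have hd := ((adj_iff_of_lt (hab.trans hbd)).1 Had).resolve_left (by omega)
  refine ⟨?_, hd⟩
  rcases hb with hb | hb | hb | ⟨i, hb⟩ <;> rcases hd with hd | hd | ⟨j, hd⟩ <;> omega

theorem val_eq_or_of_adj_u (hb : 1 ≤ b.val) (hbq : b.val ≤ q + 1) (H : (MEbar q).Adj b c) :
    c.val + 1 = b.val ∨ c.val = b.val + 1 ∨ c.val = q + 3 * b.val := by
  rcases H.ne.lt_or_gt with h | h
  · rcases (adj_iff_of_lt h).1 H with h | h | h | ⟨i, h⟩ <;> omega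
  · rcases (adj_iff_of_lt h).1 H.symm with h | h | h | ⟨i, h⟩ <;> omega

theorem val_eq_or_of_adj_v_two {i : ℕ} (hi : 1 ≤ i) (hb : b.val = q + 3 * i)
    (H : (MEbar q).Adj b c) :
    c.val = i ∨ c.val + 1 = b.val ∨ c.val = b.val + 1 := by
  rcases H.ne.lt_or_gt with h | h
  · rcases (adj_iff_of_lt h).1 H with h | h | h | ⟨j, h⟩ <;> omega
  · rcases (adj_iff_of_lt h).1 H.symm with h | h | h | ⟨j, h⟩ <;> omega

theorem val_eq_or_of_adj_v_last (hb : b.val = 4 * q + 1) (H : (MEbar q).Adj b c) :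
    c.val = 0 ∨ c.val + 1 = b.val ∨ c.val + 2 = b.val := by
  rcases H.ne.lt_or_gt with h | h
  · omega
  · rcases (adj_iff_of_lt h).1 H.symm with h | h | h | ⟨i, h⟩ <;> omega

theorem not_adj_of_adj_of_lt (hq : 2 ≤ q) (hab : a < b) (hbd : b < d) (hac : a < c)
    (Hab : (MEbar q).Adj a b) (Had : (MEbar q).Adj a d) (Hbc : (MEbar q).Adj b c) :
    ¬ (MEbar q).Adj d c := by
  intro Hdc
  obtain ⟨hb, ⟨ha, hd⟩ | ⟨ha, haq, hd⟩ | ⟨i, hi, ha, hd⟩⟩ :=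
    val_eq_succ_of_adj_of_adj hab hbd Hab Had
  · have hbc := val_eq_or_of_adj_u (by omega) (by omega) Hbc
    have hdc := val_eq_or_of_adj_v_last hd Hdc
    omega
  · have hbc := val_eq_or_of_adj_u (by omega) (by omega) Hbc
    have hdc := val_eq_or_of_adj_v_two ha hd Hdc
    omega
  · have hbc := val_eq_or_of_adj_v_two hi (by omega) Hbc
    have hdc : d.val ≠ c.val := Fin.val_ne_of_ne Hdc.ne
    omega

end MEbar

theorem stmt5_general (q : ℕ) (hq : 2 ≤ q) :
    Pairwise fun a c => ((MEbar q).commonNeighbors a c).Subsingleton :=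
  pairwise_commonNeighbors_subsingleton_of_lt fun _ _ _ _ => MEbar.not_adj_of_adj_of_lt hq

/-- for every `q ≥ 2`, the graph `MEbar_q` is `C₄`-free. -/
theorem stmt5 : ∀ q : ℕ, 2 ≤ q → C4Free (MEbar q) :=
  fun q hq => c4Free_of_commonNeighbors_subsingleton (stmt5_general q hq)
end

section
/- For every integer q ≥ 3, the graph MEbarStar_q (obtained from MEbar_q by adding the edge u_0 u_{q+1}) is C4-free. -/
/-- `MEbarStar_q` is `MEbar_q` together with the edge `u_0 u_{q+1}`. -/
def MEbarStar (q : ℕ) : SimpleGraph (Fin (4*q+2)) :=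
  MEbar q ⊔ SimpleGraph.fromRel (fun a b => a.val = 0 ∧ b.val = q+1)

/-!
The edges between the `u`-vertices and the `v`-vertices form a matching: `u_i v_{i2}`,
`u_{q+1} v_{11}` and `u_0 v_{q3}`. Hence no two consecutive edges of a 4-cycle cross this cut, and
the 4-cycle either stays on one side or crosses in two opposite edges. The `u`-vertices induce a
cycle of length `q + 2 ≥ 5`. The `v`-vertices induce a chain of triangles, for which the Hamiltonian
order is a perfect elimination ordering. Finally, the partners of two adjacent `u`-vertices are at
least three places apart in the Hamiltonian order, whereas adjacent `v`-vertices are at most two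
places apart.
-/

section C4Free

variable {V W : Type*} {G : SimpleGraph V}

theorem C4Free.of_embedding {H : SimpleGraph W} (f : G ↪g H) (hH : C4Free H) : C4Free G := by
  rintro ⟨a, b, c, d, hac, hbd, hab, hbc, hcd, hda, nac, nbd⟩
  exact hH ⟨f a, f b, f c, f d, f.injective.ne hac, f.injective.ne hbd, f.map_adj_iff.2 hab,
    f.map_adj_iff.2 hbc, f.map_adj_iff.2 hcd, f.map_adj_iff.2 hda, mt f.map_adj_iff.1 nac,
    mt f.map_adj_iff.1 nbd⟩

/-- The order on `V` is a perfect elimination ordering of `G`: the neighbours of `a` that precede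
`a` are pairwise adjacent, so vertices are eliminated from the greatest down. -/
def IsPerfectEliminationOrder [LT V] (G : SimpleGraph V) : Prop :=
  ∀ ⦃a b c : V⦄, b < c → c < a → G.Adj b a → G.Adj c a → G.Adj b c

theorem IsPerfectEliminationOrder.lt_max [LinearOrder V] (hG : IsPerfectEliminationOrder G)
    {a b c : V} (hba : G.Adj b a) (hca : G.Adj c a) (hbc : b ≠ c) (nbc : ¬ G.Adj b c) :
    a < max b c := by
  by_contra! hle
  have hb : b < a := ((le_max_left b c).trans hle).lt_of_ne hba.ne
  have hc : c < a := ((le_max_right b c).trans hle).lt_of_ne hca.ne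
  rcases lt_or_gt_of_ne hbc with h | h
  · exact nbc (hG h hc hba hca)
  · exact nbc (hG h hb hca hba).symm

theorem IsPerfectEliminationOrder.c4Free [LinearOrder V] (hG : IsPerfectEliminationOrder G) :
    C4Free G := by
  rintro ⟨a, b, c, d, hac, hbd, hab, hbc, hcd, hda, nac, nbd⟩
  have hlt : max a c < max b d :=
    max_lt (hG.lt_max hab.symm hda hbd nbd) (hG.lt_max hbc hcd.symm hbd nbd)
  have hgt : max b d < max a c :=
    max_lt (hG.lt_max hab hbc.symm hac nac) (hG.lt_max hda.symm hcd hac nac)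
  exact hlt.asymm hgt

/-- The cut between `S` and its complement is a matching cut of `G`: every vertex has at most one
neighbour on the other side. The two sides are treated uniformly, `a ∈ S ↔ b ∉ S` saying that
`a` and `b` are separated. -/
def IsMatchingCut (G : SimpleGraph V) (S : Set V) : Prop :=
  ∀ ⦃a b c : V⦄, G.Adj a b → G.Adj a c → (a ∈ S ↔ b ∉ S) → (a ∈ S ↔ c ∉ S) → b = c

theorem C4Free.of_isMatchingCut {S : Set V} (hcut : IsMatchingCut G S)
    (hS : C4Free (G.induce S)) (hSc : C4Free (G.induce Sᶜ))
    (hpartner : ∀ ⦃a b c d : V⦄, a ∈ S → b ∈ S → c ∉ S → d ∉ S →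
      G.Adj a b → G.Adj b c → G.Adj d a → ¬ G.Adj c d) : C4Free G := by
  rintro ⟨a, b, c, d, hac, hbd, hab, hbc, hcd, hda, nac, nbd⟩
  have not_both_cross_at_a : ¬ ((a ∈ S ↔ b ∉ S) ∧ (a ∈ S ↔ d ∉ S)) :=
    fun h ↦ hbd (hcut hab hda.symm h.1 h.2)
  have not_both_cross_at_b : ¬ ((b ∈ S ↔ a ∉ S) ∧ (b ∈ S ↔ c ∉ S)) :=
    fun h ↦ hac (hcut hab.symm hbc h.1 h.2)
  have not_both_cross_at_c : ¬ ((c ∈ S ↔ b ∉ S) ∧ (c ∈ S ↔ d ∉ S)) :=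
    fun h ↦ hbd (hcut hbc.symm hcd h.1 h.2)
  have not_both_cross_at_d : ¬ ((d ∈ S ↔ a ∉ S) ∧ (d ∈ S ↔ c ∉ S)) :=
    fun h ↦ hac (hcut hda hcd.symm h.1 h.2)
  have sides : (a ∈ S ∧ b ∈ S ∧ c ∈ S ∧ d ∈ S) ∨ (a ∈ S ∧ b ∈ S ∧ c ∉ S ∧ d ∉ S) ∨
      (b ∈ S ∧ c ∈ S ∧ d ∉ S ∧ a ∉ S) ∨ (c ∈ S ∧ d ∈ S ∧ a ∉ S ∧ b ∉ S) ∨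
      (d ∈ S ∧ a ∈ S ∧ b ∉ S ∧ c ∉ S) ∨ (a ∉ S ∧ b ∉ S ∧ c ∉ S ∧ d ∉ S) := by
    grind
  rcases sides with ⟨ha, hb, hc, hd⟩ | ⟨ha, hb, hc, hd⟩ | ⟨hb, hc, hd, ha⟩ | ⟨hc, hd, ha, hb⟩ |
    ⟨hd, ha, hb, hc⟩ | ⟨ha, hb, hc, hd⟩
  · exact hS ⟨⟨a, ha⟩, ⟨b, hb⟩, ⟨c, hc⟩, ⟨d, hd⟩, by simpa, by simpa, hab, hbc, hcd, hda, nac, nbd⟩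
  · exact hpartner ha hb hc hd hab hbc hda hcd
  · exact hpartner hb hc hd ha hbc hcd hab hda
  · exact hpartner hc hd ha hb hcd hda hbc hab
  · exact hpartner hd ha hb hc hda hab hcd hbc
  · exact hSc ⟨⟨a, ha⟩, ⟨b, hb⟩, ⟨c, hc⟩, ⟨d, hd⟩, by simpa, by simpa, hab, hbc, hcd, hda, nac, nbd⟩

end C4Free

section CycleGraph

variable {n : ℕ}

theorem cycleGraph_adj_iff_of_lt {a b : Fin n} (hab : a < b) :
    (SimpleGraph.cycleGraph n).Adj a b ↔ b.val = a.val + 1 ∨ a.val = 0 ∧ b.val + 1 = n := by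
  rw [SimpleGraph.cycleGraph_adj', Fin.coe_sub_iff_lt.2 hab, Fin.sub_val_of_le hab.le]
  omega

theorem cycleGraph_sub_eq_sub {a b c : Fin (n + 2)} (hac : a ≠ c)
    (hab : (SimpleGraph.cycleGraph (n + 2)).Adj a b)
    (hbc : (SimpleGraph.cycleGraph (n + 2)).Adj b c) : c - b = b - a := by
  rw [SimpleGraph.cycleGraph_adj] at hab hbc
  rcases hab with hab | hab <;> rcases hbc with hbc | hbc
  · rw [← neg_sub b c, ← neg_sub a b, hab, hbc]
  · exact absurd (sub_left_injective (hab.trans hbc.symm)) hac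
  · exact absurd (sub_right_injective (hab.trans hbc.symm)) hac
  · rw [hab, hbc]

theorem c4Free_cycleGraph (hn : 5 ≤ n) : C4Free (SimpleGraph.cycleGraph n) := by
  obtain ⟨k, rfl⟩ := Nat.exists_eq_add_of_le' hn
  rintro ⟨a, b, c, d, hac, hbd, hab, hbc, hcd, hda, -, -⟩
  -- All four steps around the cycle are the same `±1`, and they add up to zero.
  have four_nsmul_sub : 4 • (b - a) = 0 := by
    have hcb : c - b = b - a := cycleGraph_sub_eq_sub hac hab hbc
    have hdc : d - c = b - a := (cycleGraph_sub_eq_sub hbd hbc hcd).trans hcb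
    have had : a - d = b - a := (cycleGraph_sub_eq_sub hac.symm hcd hda).trans hdc
    calc 4 • (b - a) = (b - a) + (b - a) + (b - a) + (b - a) := by abel
      _ = (b - a) + (c - b) + (d - c) + (a - d) := by rw [hcb, hdc, had]
      _ = 0 := by abel
  have four_ne_zero : 4 • (1 : Fin (k + 5)) ≠ 0 := by
    simp [Fin.ext_iff, succ_nsmul, Fin.val_add, Nat.mod_eq_of_lt (show 4 < k + 5 by omega)]
  rcases SimpleGraph.cycleGraph_adj.1 hab with h | h
  · rw [← neg_sub, h, smul_neg, neg_eq_zero] at four_nsmul_sub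
    exact four_ne_zero four_nsmul_sub
  · rw [h] at four_nsmul_sub
    exact four_ne_zero four_nsmul_sub

end CycleGraph

section MEbarStar

variable {q : ℕ}

theorem mebarStar_adj_iff_of_lt {a b : Fin (4 * q + 2)} (hab : a < b) :
    (MEbarStar q).Adj a b ↔
      b.val = a.val + 1 ∨ a.val = 0 ∧ (b.val = q + 1 ∨ b.val = 4 * q + 1) ∨
        1 ≤ a.val ∧ a.val ≤ q ∧ b.val = q + 3 * a.val ∨
        ∃ i, 1 ≤ i ∧ i ≤ q ∧ a.val = q + 3 * i - 1 ∧ b.val = q + 3 * i + 1 := by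
  simp only [MEbarStar, MEbar, SimpleGraph.sup_adj, SimpleGraph.fromRel_adj, ne_eq, hab.ne,
    not_false_eq_true, true_and]
  rw [Fin.lt_def] at hab
  constructor
  · rintro (((h | h | ⟨i, h⟩ | h) | (h | h | ⟨i, h⟩ | ⟨i, h⟩)) | (h | h)) <;>
      first | exact .inr (.inr (.inr h)) | grind
  · rintro (h | ⟨ha, hb | hb⟩ | ⟨h₁, h₂, h⟩ | h)
    · exact .inl (.inl (.inl h))
    · exact .inr (.inl ⟨ha, hb⟩)
    · exact .inl (.inl (.inr (.inl ⟨ha, hb⟩)))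
    · exact .inl (.inl (.inr (.inr (.inl ⟨a, h₁, h₂, rfl, h⟩))))
    · exact .inl (.inl (.inr (.inr (.inr h))))

/-- The vertices `u_0, …, u_{q+1}` of `MEbarStar q`; its complement consists of the `v_{ij}`. -/
def uVertices (q : ℕ) : Set (Fin (4 * q + 2)) := {x | x.val ≤ q + 1}

theorem mem_uVertices {x : Fin (4 * q + 2)} : x ∈ uVertices q ↔ x.val ≤ q + 1 := Iff.rfl

theorem mebarStar_adj_iff_of_mem_uVertices {a b : Fin (4 * q + 2)} (hb : b ∈ uVertices q)
    (hab : a < b) :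
    (MEbarStar q).Adj a b ↔ b.val = a.val + 1 ∨ a.val = 0 ∧ b.val = q + 1 := by
  rw [mem_uVertices] at hb
  rw [mebarStar_adj_iff_of_lt hab]
  grind

theorem val_of_mebarStar_adj_of_notMem_uVertices {a b : Fin (4 * q + 2)} (ha : a ∉ uVertices q)
    (hab : a < b) (h : (MEbarStar q).Adj a b) : b.val = a.val + 1 ∨ b.val = a.val + 2 := by
  rw [mem_uVertices] at ha
  rw [mebarStar_adj_iff_of_lt hab] at h
  grind

theorem val_of_mebarStar_adj_crossing {a b : Fin (4 * q + 2)} (ha : a ∈ uVertices q)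
    (hb : b ∉ uVertices q) (h : (MEbarStar q).Adj a b) :
    a.val = 0 ∧ b.val = 4 * q + 1 ∨ 1 ≤ a.val ∧ a.val ≤ q ∧ b.val = q + 3 * a.val ∨
      a.val = q + 1 ∧ b.val = q + 2 := by
  rw [mem_uVertices] at ha hb
  rw [mebarStar_adj_iff_of_lt (Fin.lt_def.2 (by omega))] at h
  grind

/-- The cycle `u_0, …, u_{q+1}`: inclusion of the subgraph induced by the `u`-vertices into the
standard cycle, which sends `u_i` to `i`. -/
def uCycleEmbedding :
    (MEbarStar q).induce (uVertices q) ↪g SimpleGraph.cycleGraph (q + 2) where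
  toFun x := x.1.castLT (Nat.lt_succ_of_le (mem_uVertices.1 x.2))
  inj' x y h := Subtype.ext (Fin.ext (Fin.mk.inj h))
  map_rel_iff' := by
    have adj_iff_of_lt {x y : Fin (4 * q + 2)} (hx : x.val < q + 2) (hy : y.val < q + 2)
        (h : x < y) : (SimpleGraph.cycleGraph (q + 2)).Adj (x.castLT hx) (y.castLT hy) ↔
          (MEbarStar q).Adj x y := by
      have h' : x.castLT hx < y.castLT hy := h
      rw [cycleGraph_adj_iff_of_lt h',
        mebarStar_adj_iff_of_mem_uVertices (mem_uVertices.2 (Nat.le_of_lt_succ hy)) h]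
      simp only [Fin.val_castLT]
      omega
    intro x y
    rcases lt_trichotomy x.1 y.1 with h | h | h
    · exact adj_iff_of_lt _ _ h
    · obtain rfl : x = y := Subtype.ext h
      exact iff_of_false (SimpleGraph.irrefl _) (SimpleGraph.irrefl _)
    · rw [SimpleGraph.adj_comm, SimpleGraph.adj_comm _ x]
      exact adj_iff_of_lt _ _ h

theorem c4Free_induce_uVertices (hq : 3 ≤ q) : C4Free ((MEbarStar q).induce (uVertices q)) :=
  (c4Free_cycleGraph (by omega)).of_embedding uCycleEmbedding

theorem isPerfectEliminationOrder_induce_compl_uVertices :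
    IsPerfectEliminationOrder ((MEbarStar q).induce (uVertices q)ᶜ) := by
  intro a b c hbc hca hab hac
  have hb := val_of_mebarStar_adj_of_notMem_uVertices b.2 (hbc.trans hca) hab
  have hc := val_of_mebarStar_adj_of_notMem_uVertices c.2 hca hac
  have hbc' : b.1.val < c.1.val := hbc
  exact (mebarStar_adj_iff_of_lt hbc).2 (Or.inl (by omega))

theorem isMatchingCut_uVertices : IsMatchingCut (MEbarStar q) (uVertices q) := by
  intro a b c hab hac hb hc
  by_cases ha : a ∈ uVertices q
  · have hb' := val_of_mebarStar_adj_crossing ha (hb.1 ha) hab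
    have hc' := val_of_mebarStar_adj_crossing ha (hc.1 ha) hac
    omega
  · have hb' := val_of_mebarStar_adj_crossing (by tauto) ha hab.symm
    have hc' := val_of_mebarStar_adj_crossing (by tauto) ha hac.symm
    omega

theorem not_mebarStar_adj_partners (hq : 2 ≤ q) {a b c d : Fin (4 * q + 2)}
    (ha : a ∈ uVertices q) (hb : b ∈ uVertices q) (hc : c ∉ uVertices q) (hd : d ∉ uVertices q)
    (hab : (MEbarStar q).Adj a b) (hbc : (MEbarStar q).Adj b c) (hda : (MEbarStar q).Adj d a) :
    ¬ (MEbarStar q).Adj c d := by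
  wlog hlt : a < b generalizing a b c d
  · exact fun h ↦ this hb ha hd hc hab.symm hda.symm hbc.symm
      (lt_of_le_of_ne (not_lt.1 hlt) hab.ne') h.symm
  intro hcd
  have hab' := (mebarStar_adj_iff_of_mem_uVertices hb hlt).1 hab
  have hbc' := val_of_mebarStar_adj_crossing hb hc hbc
  have had' := val_of_mebarStar_adj_crossing ha hd hda.symm
  rcases lt_or_gt_of_ne hcd.ne with h | h
  · have := val_of_mebarStar_adj_of_notMem_uVertices hc h hcd
    omega
  · have := val_of_mebarStar_adj_of_notMem_uVertices hd h hcd.symm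
    omega

end MEbarStar

/-- for every `q ≥ 3`, the graph `MEbarStar_q` is `C₄`-free. -/
theorem stmt10 : ∀ q : ℕ, 3 ≤ q → C4Free (MEbarStar q) := by
  intro q hq
  exact C4Free.of_isMatchingCut isMatchingCut_uVertices (c4Free_induce_uVertices hq)
    isPerfectEliminationOrder_induce_compl_uVertices.c4Free
    fun _ _ _ _ ↦ not_mebarStar_adj_partners (by omega)
end

section
/- For every integer q ≥ 2, the graph MEbarStar_q admits a frozen (2q+1)-clique-partition. -/
/-- `f` describes a partition of the vertices of `G` into at most `k` cliques:
each fibre of `f` is a clique. -/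
def IsCliquePartition {V : Type*} (G : SimpleGraph V) {k : ℕ} (f : V → Fin k) : Prop :=
  ∀ a b : V, f a = f b → a ≠ b → G.Adj a b

/-- A clique partition is frozen if every vertex has a non-neighbour in each clique
of the partition other than the clique containing it. -/
def IsFrozenCliquePartition {V : Type*} (G : SimpleGraph V) {k : ℕ} (f : V → Fin k) : Prop :=
  IsCliquePartition G f ∧ ∀ (v : V) (j : Fin k), j ≠ f v → ∃ w : V, f w = j ∧ ¬ G.Adj v w

/-!
A perfect matching none of whose edges lies in a triangle is a frozen clique partition: no vertex is
adjacent to both ends of a matching edge. For `q ≥ 2` the only triangles of `MEbarStar_q` are the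
`v_{i1} v_{i2} v_{i3}`, and none of their edges belongs to the perfect matching that consists of
`u_0 v_{q3}`, the edges `u_i v_{i2}` for `1 ≤ i ≤ q`, `u_{q+1} v_{11}`, and the edges
`v_{i3} v_{(i+1)1}` for `1 ≤ i < q`.
-/

theorem exists_isFrozenCliquePartition_of_perfect_matching {V ι : Type*} {G : SimpleGraph V}
    {k : ℕ} (index : ι ≃ Fin k) {tail head : ι → V}
    (bijective_ends : Function.Bijective (Sum.elim tail head))
    (adj_ends : ∀ j, G.Adj (tail j) (head j))
    (commonNeighbors_ends : ∀ j, G.commonNeighbors (tail j) (head j) = ∅) :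
    ∃ f : V → Fin k, IsFrozenCliquePartition G f := by
  let ends : ι ⊕ ι ≃ V := Equiv.ofBijective _ bijective_ends
  let pairOf : ι ⊕ ι → ι := Sum.elim id id
  refine ⟨fun v => index (pairOf (ends.symm v)), ?clique, ?frozen⟩
  case clique =>
    intro a b hab hne
    obtain ⟨s, rfl⟩ := ends.surjective a
    obtain ⟨t, rfl⟩ := ends.surjective b
    have same_pair : pairOf s = pairOf t := by simpa using hab
    rcases s with i | i <;> rcases t with j | j <;> obtain rfl : i = j := same_pair
    · exact absurd rfl hne
    · exact adj_ends i
    · exact (adj_ends i).symm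
    · exact absurd rfl hne
  case frozen =>
    intro v c _
    obtain ⟨j, rfl⟩ := index.surjective c
    by_contra! adj_of_mem_pair
    have adj_tail : G.Adj v (tail j) :=
      adj_of_mem_pair _ (congrArg (index ∘ pairOf) (ends.symm_apply_apply (.inl j)))
    have adj_head : G.Adj v (head j) :=
      adj_of_mem_pair _ (congrArg (index ∘ pairOf) (ends.symm_apply_apply (.inr j)))
    exact Set.eq_empty_iff_forall_notMem.1 (commonNeighbors_ends j) v
      ⟨adj_tail.symm, adj_head.symm⟩

namespace MEbarStar

variable {q : ℕ}

/-- The edges of `MEbarStar q`, on the numbering of its vertices, oriented from the smaller to the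
larger number; the indices `i` are those of the definition of `MEbar` shifted to start at `0`. -/
def ForwardEdge (q a b : ℕ) : Prop :=
  b = a + 1 ∨ (a = 0 ∧ b = 4 * q + 1) ∨ (a = 0 ∧ b = q + 1) ∨
    (∃ i < q, a = i + 1 ∧ b = q + 3 * i + 3) ∨
    (∃ i < q, a = q + 3 * i + 2 ∧ b = q + 3 * i + 4)

lemma ForwardEdge.lt {a b : ℕ} (h : ForwardEdge q a b) : a < b := by
  rcases h with h | h | h | ⟨i, h⟩ | ⟨i, h⟩ <;> omega

lemma forwardEdge_iff {a b : ℕ} :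
    ForwardEdge q a b ↔
      (b = a + 1 ∨ (a = 0 ∧ b = 4 * q + 1) ∨
        (∃ i, 1 ≤ i ∧ i ≤ q ∧ a = i ∧ b = q + 3 * i) ∨
        (∃ i, 1 ≤ i ∧ i ≤ q ∧ a = q + 3 * i - 1 ∧ b = q + 3 * i + 1)) ∨
      (a = 0 ∧ b = q + 1) := by
  constructor
  · rintro (h | h | h | ⟨i, h⟩ | ⟨i, h⟩)
    · exact .inl (.inl h)
    · exact .inl (.inr (.inl h))
    · exact .inr h
    · exact .inl (.inr (.inr (.inl ⟨i + 1, by omega⟩)))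
    · exact .inl (.inr (.inr (.inr ⟨i + 1, by omega⟩)))
  · rintro ((h | h | ⟨i, h⟩ | ⟨i, h⟩) | h)
    · exact .inl h
    · exact .inr (.inl h)
    · exact .inr (.inr (.inr (.inl ⟨i - 1, by omega⟩)))
    · exact .inr (.inr (.inr (.inr ⟨i - 1, by omega⟩)))
    · exact .inr (.inr (.inl h))

lemma adj_iff {a b : Fin (4 * q + 2)} :
    (MEbarStar q).Adj a b ↔ ForwardEdge q a b ∨ ForwardEdge q b a := by
  have ne_of_edge (h : ForwardEdge q a b ∨ ForwardEdge q b a) : a ≠ b := by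
    rintro rfl
    exact h.elim (fun h => h.lt.false) (fun h => h.lt.false)
  rw [← and_iff_right_of_imp ne_of_edge, forwardEdge_iff, forwardEdge_iff, or_or_or_comm,
    and_or_left]
  rfl

lemma val_of_adj_u_zero {a w : Fin (4 * q + 2)} (ha : a.val = 0) (h : (MEbarStar q).Adj a w) :
    w.val = 1 ∨ w.val = q + 1 ∨ w.val = 4 * q + 1 := by
  rcases adj_iff.1 h with (h | h | h | ⟨i, h⟩ | ⟨i, h⟩) | (h | h | h | ⟨i, h⟩ | ⟨i, h⟩) <;> omega

lemma val_of_adj_v_last_three {a w : Fin (4 * q + 2)} (ha : a.val = 4 * q + 1)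
    (h : (MEbarStar q).Adj a w) : w.val = 0 ∨ w.val + 1 = 4 * q ∨ w.val = 4 * q := by
  rcases adj_iff.1 h with (h | h | h | ⟨i, h⟩ | ⟨i, h⟩) | (h | h | h | ⟨i, h⟩ | ⟨i, h⟩) <;> omega

lemma val_of_adj_u {a w : Fin (4 * q + 2)} {i : ℕ} (hi : i < q) (ha : a.val = i + 1)
    (h : (MEbarStar q).Adj a w) :
    w.val = i ∨ w.val = i + 2 ∨ w.val = q + 3 * i + 3 := by
  rcases adj_iff.1 h with (h | h | h | ⟨i, h⟩ | ⟨i, h⟩) | (h | h | h | ⟨i, h⟩ | ⟨i, h⟩) <;> omega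

lemma val_of_adj_v_two {a w : Fin (4 * q + 2)} {i : ℕ} (ha : a.val = q + 3 * i + 3)
    (h : (MEbarStar q).Adj a w) :
    w.val = i + 1 ∨ w.val = q + 3 * i + 2 ∨ w.val = q + 3 * i + 4 := by
  rcases adj_iff.1 h with (h | h | h | ⟨i, h⟩ | ⟨i, h⟩) | (h | h | h | ⟨i, h⟩ | ⟨i, h⟩) <;> omega

lemma val_of_adj_u_last_or_v_three {a w : Fin (4 * q + 2)} {i : ℕ}
    (ha : a.val = q + 3 * i + 1) (h : (MEbarStar q).Adj a w) :
    w.val = q + 3 * i + 2 ∨ w.val < q + 3 * i + 1 := by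
  rcases adj_iff.1 h with (h | h | h | ⟨i, h⟩ | ⟨i, h⟩) | (h | h | h | ⟨i, h⟩ | ⟨i, h⟩) <;> omega

lemma val_of_adj_v_one {a w : Fin (4 * q + 2)} {i : ℕ} (ha : a.val = q + 3 * i + 2)
    (h : (MEbarStar q).Adj a w) :
    w.val = q + 3 * i + 1 ∨ q + 3 * i + 2 < w.val := by
  rcases adj_iff.1 h with (h | h | h | ⟨i, h⟩ | ⟨i, h⟩) | (h | h | h | ⟨i, h⟩ | ⟨i, h⟩) <;> omega

/-- The smaller end of each edge of a perfect matching of `MEbarStar q`. The matching edge `none` is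
`u_0 v_{q3}`, the edge `some (.inl i)` is `u_{i+1} v_{(i+1)2}`, and `some (.inr i)` is
`v_{i3} v_{(i+1)1}`, with `u_{q+1}` in place of `v_{i3}` for `i = 0`. -/
def matchingTail (q : ℕ) : Option (Fin q ⊕ Fin q) → Fin (4 * q + 2)
  | none => ⟨0, by omega⟩
  | some (.inl i) => ⟨i + 1, by omega⟩
  | some (.inr i) => ⟨q + 3 * i + 1, by omega⟩

/-- The larger end of the matching edge whose smaller end is given by `matchingTail`. -/
def matchingHead (q : ℕ) : Option (Fin q ⊕ Fin q) → Fin (4 * q + 2)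
  | none => ⟨4 * q + 1, by omega⟩
  | some (.inl i) => ⟨q + 3 * i + 3, by omega⟩
  | some (.inr i) => ⟨q + 3 * i + 2, by omega⟩

lemma injective_matching_ends :
    Function.Injective (Sum.elim (matchingTail q) (matchingHead q)) := by
  rintro ((_ | i | i) | (_ | i | i)) ((_ | j | j) | (_ | j | j)) h <;>
    simp only [Sum.elim_inl, Sum.elim_inr, matchingTail, matchingHead, Fin.mk.injEq] at h <;>
    first | rfl | (exfalso; omega) | (obtain rfl : i = j := Fin.ext (by omega); rfl)

lemma card_matching : Fintype.card (Option (Fin q ⊕ Fin q)) = 2 * q + 1 := by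
  simp [two_mul]

lemma bijective_matching_ends :
    Function.Bijective (Sum.elim (matchingTail q) (matchingHead q)) := by
  refine (Fintype.bijective_iff_injective_and_card _).2 ⟨injective_matching_ends, ?_⟩
  rw [Fintype.card_sum, card_matching, Fintype.card_fin]
  omega

lemma adj_matching_ends (j : Option (Fin q ⊕ Fin q)) :
    (MEbarStar q).Adj (matchingTail q j) (matchingHead q j) := by
  refine adj_iff.2 (.inl ?_)
  rcases j with _ | i | i
  · exact .inr (.inl ⟨rfl, rfl⟩)
  · exact .inr (.inr (.inr (.inl ⟨i, i.isLt, rfl, rfl⟩)))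
  · exact .inl rfl

lemma commonNeighbors_matching_ends (j : Option (Fin q ⊕ Fin q)) :
    (MEbarStar q).commonNeighbors (matchingTail q j) (matchingHead q j) = ∅ := by
  refine Set.eq_empty_of_forall_notMem fun w ⟨adj_tail, adj_head⟩ => ?_
  rcases j with _ | i | i
  · have val_of_adj_tail := val_of_adj_u_zero rfl adj_tail
    have val_of_adj_head := val_of_adj_v_last_three rfl adj_head
    omega
  · have val_of_adj_tail := val_of_adj_u i.isLt rfl adj_tail
    have val_of_adj_head := val_of_adj_v_two rfl adj_head
    omega
  · have val_of_adj_tail := val_of_adj_u_last_or_v_three rfl adj_tail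
    have val_of_adj_head := val_of_adj_v_one rfl adj_head
    omega

end MEbarStar

/-- for every `q ≥ 2`, `MEbarStar_q` admits a frozen
`(2q+1)`-clique-partition. -/
theorem stmt12 : ∀ q : ℕ, 2 ≤ q →
    ∃ f : Fin (4*q+2) → Fin (2*q+1), IsFrozenCliquePartition (MEbarStar q) f := by
  intro q _
  exact exists_isFrozenCliquePartition_of_perfect_matching
    (Fintype.equivFinOfCardEq MEbarStar.card_matching) MEbarStar.bijective_matching_ends
    MEbarStar.adj_matching_ends MEbarStar.commonNeighbors_matching_ends
end

section
/- For every integer q ≥ 2, the clique partition number and the independence number of KMbar_q are equal, and θ(KMbar_q) = α(KMbar_q) = 2q. -/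
/-- The clique partition number `θ(G)`: the least `k` such that the vertices of `G`
can be partitioned into at most `k` cliques. -/
noncomputable def cliquePartNum {V : Type*} (G : SimpleGraph V) : ℕ :=
  sInf {k : ℕ | ∃ f : V → Fin k, IsCliquePartition G f}

/-- The independence number `α(G)`: the maximum size of an independent set of `G`. -/
noncomputable def indepNum {V : Type*} (G : SimpleGraph V) : ℕ :=
  sSup {n : ℕ | ∃ s : Finset V, s.card = n ∧ ∀ a ∈ s, ∀ b ∈ s, a ≠ b → ¬ G.Adj a b}

/-- `KMbar_q` is `MEbar_q` with the edges `u_1u_2, u_2u_3, …, u_{q-1}u_q` deleted. -/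
def KMbar (q : ℕ) : SimpleGraph (Fin (4*q+2)) :=
  MEbar q \ SimpleGraph.fromRel (fun a b => ∃ i, 1 ≤ i ∧ i ≤ q - 1 ∧ a.val = i ∧ b.val = i+1)

/-!
A clique partition separates the points of an independent set, so a partition into `k` cliques
together with an independent set of size `k` forces `θ = α = k`. In `KMbar_q` the deleted edges
leave `u_1, …, u_q` independent, and adding `v_{11}, v_{21}, …, v_{q1}` gives `2q` independent
vertices. They are matched by the `2q` cliques `{u_0, u_1}`, `{u_q, u_{q+1}}`,
`{v_{11}, v_{12}, v_{13}}`, `{v_{q1}, v_{q2}, v_{q3}}` and, for `1 < i < q`, `{u_i, v_{i2}}` and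
`{v_{i1}, v_{i3}}`.
-/

namespace IsCliquePartition

variable {V : Type*} {G : SimpleGraph V} {k : ℕ} {f : V → Fin k} {s : Finset V}

theorem card_le_of_isIndepSet (hf : IsCliquePartition G f) (hs : G.IsIndepSet s) :
    s.card ≤ k := by
  let coloring : Gᶜ.Coloring (Fin k) :=
    SimpleGraph.Coloring.mk f fun {a b} hab hfab => hab.2 (hf a b hfab hab.1)
  have hclique : Gᶜ.IsClique s := G.isClique_compl.2 hs
  simpa only [Fintype.card_fin] using hclique.card_le_of_coloring coloring

theorem cliquePartNum_eq (hf : IsCliquePartition G f) (hs : G.IsNIndepSet k s) :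
    cliquePartNum G = k := by
  refine IsLeast.csInf_eq ⟨⟨f, hf⟩, ?_⟩
  rintro l ⟨g, hg⟩
  exact hs.card_eq ▸ hg.card_le_of_isIndepSet hs.isIndepSet

theorem indepNum_eq (hf : IsCliquePartition G f) (hs : G.IsNIndepSet k s) :
    indepNum G = k := by
  refine IsGreatest.csSup_eq ⟨⟨s, hs.card_eq, fun _ ha _ hb => hs.isIndepSet ha hb⟩, ?_⟩
  rintro _ ⟨t, rfl, ht⟩
  exact hf.card_le_of_isIndepSet fun a ha b hb => ht a ha b hb

end IsCliquePartition

theorem MEbar.adj_iff_of_lt_s14 {q : ℕ} {a b : Fin (4 * q + 2)} (hab : a < b) :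
    (MEbar q).Adj a b ↔
      b.val = a.val + 1 ∨
      (a.val = 0 ∧ b.val = 4 * q + 1) ∨
      (1 ≤ a.val ∧ a.val ≤ q ∧ b.val = q + 3 * a.val) ∨
      (q + 2 ≤ a.val ∧ (a.val - q - 2) % 3 = 0 ∧ b.val = a.val + 2) := by
  rw [MEbar, SimpleGraph.fromRel_adj, and_iff_right hab.ne]
  constructor
  · rintro ((hstep | hclose | ⟨i, hi⟩ | ⟨i, hi⟩) | (hstep | hclose | ⟨i, hi⟩ | ⟨i, hi⟩)) <;> omega
  · rintro (hstep | hclose | ⟨hone, hle, hb⟩ | ⟨ha, hmod, hb⟩)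
    · exact .inl (.inl hstep)
    · exact .inl (.inr (.inl hclose))
    · exact .inl (.inr (.inr (.inl ⟨a, hone, hle, rfl, hb⟩)))
    · exact .inl (.inr (.inr (.inr ⟨(a.val - q - 2) / 3 + 1, by omega⟩)))

namespace KMbar

variable {q : ℕ}

theorem adj_iff_of_lt_s14 {a b : Fin (4 * q + 2)} (hab : a < b) :
    (KMbar q).Adj a b ↔ (MEbar q).Adj a b ∧ ¬(1 ≤ a.val ∧ a.val < q ∧ b.val = a.val + 1) := by
  rw [KMbar, SimpleGraph.sdiff_adj, SimpleGraph.fromRel_adj, and_iff_right hab.ne]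
  refine and_congr_right fun _ => not_congr ⟨?_, fun h => .inl ⟨a, by omega⟩⟩
  rintro (⟨i, hi⟩ | ⟨i, hi⟩) <;> omega

/-- The index of the clique containing vertex `a` in a partition of `KMbar q` into `2q` cliques.
Index `i - 1` is the clique of `u_i` for `1 ≤ i ≤ q` and index `q + i - 1` is that of `v_{i1}`;
the truncated `a - 1` and the `min` put `u_0` with `u_1` and `u_{q+1}` with `u_q`. A vertex
`a ≥ q + 2` is `v_{ij}` with `i - 1 = (a - q - 2) / 3` and `j - 1 = (a - q - 2) % 3`. -/
def cliqueIndex (q a : ℕ) : ℕ :=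
  if a ≤ q + 1 then min (a - 1) (q - 1)
  else if (a - q - 2) % 3 = 1 ∧ 0 < (a - q - 2) / 3 ∧ (a - q - 2) / 3 < q - 1
  then (a - q - 2) / 3
  else q + (a - q - 2) / 3

theorem cliqueIndex_lt (hq : 0 < q) {a : ℕ} (ha : a < 4 * q + 2) : cliqueIndex q a < 2 * q := by
  unfold cliqueIndex
  split_ifs <;> omega

theorem adj_of_cliqueIndex_eq (hq : 2 ≤ q) {a b : Fin (4 * q + 2)} (hab : a < b)
    (h : cliqueIndex q a = cliqueIndex q b) : (KMbar q).Adj a b := by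
  rw [adj_iff_of_lt_s14 hab, MEbar.adj_iff_of_lt_s14 hab]
  unfold cliqueIndex at h
  rcases le_or_gt b.val (q + 1) with hbu | hbv
  · have hends : a.val = 0 ∧ b.val = 1 ∨ a.val = q ∧ b.val = q + 1 := by
      split_ifs at h <;> omega
    omega
  rcases le_or_gt a.val (q + 1) with hau | hav
  · have hspoke : 1 < a.val ∧ a.val < q ∧ b.val = q + 3 * a.val := by
      split_ifs at h <;> omega
    omega
  · have htriangle : (a.val - q - 2) / 3 = (b.val - q - 2) / 3 := by
      split_ifs at h <;> omega
    omega

theorem isCliquePartition_cliqueIndex (hq : 2 ≤ q) :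
    IsCliquePartition (KMbar q)
      fun a => (⟨cliqueIndex q a, cliqueIndex_lt (by omega) a.isLt⟩ : Fin (2 * q)) := by
  intro a b hab hne
  have hindex : cliqueIndex q a = cliqueIndex q b := congrArg Fin.val hab
  rcases hne.lt_or_gt with hlt | hgt
  · exact adj_of_cliqueIndex_eq hq hlt hindex
  · exact (adj_of_cliqueIndex_eq hq hgt hindex.symm).symm

/-- The independent vertices `u_1, …, u_q` (left summand) and `v_{11}, …, v_{q1}` (right summand)
of `KMbar q`; the indices `i : Fin q` start at `0`, so `i` stands for the paper's `i + 1`. -/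
def indepVertex (q : ℕ) : Fin q ⊕ Fin q → Fin (4 * q + 2)
  | .inl i => ⟨i + 1, by omega⟩
  | .inr i => ⟨q + 2 + 3 * i, by omega⟩

theorem indepVertex_injective : Function.Injective (indepVertex q) := by
  rintro (i | i) (j | j) hij <;>
    simp only [indepVertex, Sum.inl.injEq, Sum.inr.injEq, reduceCtorEq, Fin.ext_iff] at hij ⊢ <;>
    omega

theorem not_adj_indepVertex_of_lt {x y : Fin q ⊕ Fin q} (hxy : indepVertex q x < indepVertex q y) :
    ¬(KMbar q).Adj (indepVertex q x) (indepVertex q y) := by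
  rw [adj_iff_of_lt_s14 hxy, MEbar.adj_iff_of_lt_s14 hxy]
  rcases x with i | i <;> rcases y with j | j <;> simp only [indepVertex] <;> omega

theorem not_adj_indepVertex (x y : Fin q ⊕ Fin q) :
    ¬(KMbar q).Adj (indepVertex q x) (indepVertex q y) := by
  rcases lt_trichotomy (indepVertex q x) (indepVertex q y) with hlt | heq | hgt
  · exact not_adj_indepVertex_of_lt hlt
  · exact heq ▸ (KMbar q).irrefl
  · exact fun hadj => not_adj_indepVertex_of_lt hgt hadj.symm

theorem isNIndepSet_image_indepVertex (q : ℕ) :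
    (KMbar q).IsNIndepSet (2 * q) (Finset.univ.image (indepVertex q)) where
  isIndepSet := by
    rw [Finset.coe_image, Finset.coe_univ, Set.image_univ]
    rintro _ ⟨x, rfl⟩ _ ⟨y, rfl⟩ -
    exact not_adj_indepVertex x y
  card_eq := by
    rw [Finset.card_image_of_injective _ indepVertex_injective, Finset.card_univ,
      Fintype.card_sum, Fintype.card_fin, two_mul]

end KMbar

/-- for every `q ≥ 2`, `θ(KMbar_q) = α(KMbar_q) = 2q`. -/
theorem stmt14 : ∀ q : ℕ, 2 ≤ q →
    cliquePartNum (KMbar q) = 2*q ∧ indepNum (KMbar q) = 2*q := by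
  intro q hq
  have hpart := KMbar.isCliquePartition_cliqueIndex hq
  have hindep := KMbar.isNIndepSet_image_indepVertex q
  exact ⟨hpart.cliquePartNum_eq hindep, hpart.indepNum_eq hindep⟩
end

section
/- Let H be a finite simple graph with a k-clique-partition Q and a frozen (k+1)-clique-partition F, and let x and y be adjacent vertices of H which lie in different cliques of Q such that either (1) x and y lie in different cliques of F, or (2) {x,y} is a clique of F. Let H′ be obtained from H by subdividing the edge xy (deleting xy, adding new vertices u, v, and adding the edges xu, uv, vy). Then H′ is (k+1)-clique-partitionable and admits a frozen (k+2)-clique-partition. Furthermore: (3) if θ(H) = k, then θ(H′) = k+1; and (4) if H is C4-free and, in case (1), xy is not the middle edge of a diamond in H, then H′ is C4-free. -/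
/-- The graph obtained from `H` by subdividing the edge `xy`: the edge `xy` is deleted,
two new vertices `u = Sum.inr 0` and `v = Sum.inr 1` are added, together with the
edges `xu`, `uv`, `vy`. -/
def subdivide {V : Type*} (H : SimpleGraph V) (x y : V) : SimpleGraph (V ⊕ Fin 2) :=
  SimpleGraph.fromRel (fun p q =>
    (∃ a b : V, p = Sum.inl a ∧ q = Sum.inl b ∧ H.Adj a b ∧
      ¬(a = x ∧ b = y) ∧ ¬(a = y ∧ b = x)) ∨
    (p = Sum.inl x ∧ q = Sum.inr 0) ∨
    (p = Sum.inr 0 ∧ q = Sum.inr 1) ∨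
    (p = Sum.inr 1 ∧ q = Sum.inl y))

/-!
Write `u`, `v` for the new vertices and `H'` for the subdivided graph.

* `Q` together with `{u, v}` is a clique partition of `H'`, as no clique of `Q` contains the
  deleted edge. The same extension of `F` is frozen in case (1); in case (2) the clique `{x, y}` of
  `F` is replaced by `{x, u}` and `{v, y}`.
* Conversely, `u` and `v` have no neighbours outside the path `x, u, v, y`. So in a clique partition
  of `H'` the clique of `v` contains at most one old vertex, which can only be `y`. Moving `y` to
  the clique of `u`, whose only possible old vertex is `x`, saves one clique in `H`.
* A four-cycle through `u` or `v` would contain the whole path, whose ends are nonadjacent in `H'`.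
  A four-cycle on old vertices is induced in `H'` but not in `H` only if `xy` is one of its
  diagonals, and then it is a diamond of `H` with middle edge `xy`. In case (2) there is no such
  diamond: `x` and `y` have no common neighbour, because `F` is frozen.
-/

section CliquePartition

variable {V : Type*} {G : SimpleGraph V} {x y : V} {k m n : ℕ}

theorem cliquePartNum_le {f : V → Fin k} (hf : IsCliquePartition G f) : cliquePartNum G ≤ k :=
  Nat.sInf_le ⟨f, hf⟩

theorem exists_isCliquePartition_cliquePartNum {f : V → Fin k} (hf : IsCliquePartition G f) :
    ∃ g : V → Fin (cliquePartNum G), IsCliquePartition G g :=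
  Nat.sInf_mem (s := {k | ∃ f : V → Fin k, IsCliquePartition G f}) ⟨k, f, hf⟩

theorem IsCliquePartition.cliquePartNum_le_of_forall_ne {f : V → Fin (n + 1)}
    (hf : IsCliquePartition G f) {c : Fin (n + 1)} (hc : ∀ a, f a ≠ c) : cliquePartNum G ≤ n := by
  choose g hg using fun a => Fin.exists_succAbove_eq (hc a)
  refine cliquePartNum_le (f := g) fun a b hab => hf a b ?_
  rw [← hg a, ← hg b, hab]

theorem IsFrozenCliquePartition.exists_eq_and_ne {F : V → Fin m}
    (hF : IsFrozenCliquePartition G F) (hxy : G.Adj x y) (hne : F x ≠ F y) (j : Fin m) :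
    ∃ w, F w = j ∧ w ≠ x := by
  by_cases hj : j = F x
  · obtain ⟨w, hw, hyw⟩ := hF.2 y j (hj ▸ hne)
    exact ⟨w, hw, fun h => hyw (h ▸ hxy.symm)⟩
  · obtain ⟨w, hw, -⟩ := hF.2 x j hj
    exact ⟨w, hw, fun h => hj (h ▸ hw.symm)⟩

theorem IsFrozenCliquePartition.not_adj_of_adj {F : V → Fin m} (hF : IsFrozenCliquePartition G F)
    (hcell : ∀ z, F z = F x ↔ z = x ∨ z = y) {r : V} (hrx : G.Adj r x) : ¬ G.Adj r y := by
  intro hry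
  have hr : F x ≠ F r := fun h => ((hcell r).1 h.symm).elim hrx.ne hry.ne
  obtain ⟨w, hw, hrw⟩ := hF.2 r (F x) hr
  obtain rfl | rfl := (hcell w).1 hw
  · exact hrw hrx
  · exact hrw hry

end CliquePartition

section Adjacency

variable {V : Type*} {H : SimpleGraph V} {x y a b : V} {i j : Fin 2} {p : V ⊕ Fin 2}

theorem subdivide_adj_inl_inl :
    (subdivide H x y).Adj (Sum.inl a) (Sum.inl b) ↔ H.Adj a b ∧ s(a, b) ≠ s(x, y) := by
  have hne : H.Adj a b → a ≠ b := fun h => h.ne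
  have hcomm : H.Adj b a ↔ H.Adj a b := H.adj_comm b a
  simp only [subdivide, SimpleGraph.fromRel_adj, ne_eq, Sum.inl.injEq, reduceCtorEq, and_false,
    false_and, or_false, exists_eq_left', exists_and_left, Sym2.eq_iff]
  tauto

theorem subdivide_adj_inl_inr :
    (subdivide H x y).Adj (Sum.inl a) (Sum.inr i) ↔ a = ![x, y] i := by
  fin_cases i <;> simp [subdivide]

theorem subdivide_adj_inr_inl :
    (subdivide H x y).Adj (Sum.inr i) (Sum.inl a) ↔ a = ![x, y] i := by
  rw [SimpleGraph.adj_comm, subdivide_adj_inl_inr]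

theorem subdivide_adj_inr_inr : (subdivide H x y).Adj (Sum.inr i) (Sum.inr j) ↔ i ≠ j := by
  fin_cases i <;> fin_cases j <;> simp [subdivide]

theorem subdivide_adj_inr :
    (subdivide H x y).Adj (Sum.inr i) p ↔ p = Sum.inl (![x, y] i) ∨ p = Sum.inr i.rev := by
  obtain a | j := p
  · simp [subdivide_adj_inr_inl]
  · rw [subdivide_adj_inr_inr]
    fin_cases i <;> fin_cases j <;> simp

end Adjacency

section ExtendPartition

variable {V : Type*} {H : SimpleGraph V} {x y : V} {m : ℕ}

/-- The extension of a clique partition of `H` to the subdivision of an edge of `H` by one further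
clique, consisting of the two new vertices. -/
def extendPartition (f : V → Fin m) : V ⊕ Fin 2 → Fin (m + 1) :=
  Sum.elim (fun a => (f a).castSucc) (fun _ => Fin.last m)

theorem IsCliquePartition.extendPartition_subdivide {f : V → Fin m} (hf : IsCliquePartition H f)
    (hne : f x ≠ f y) : IsCliquePartition (subdivide H x y) (extendPartition f) := by
  rintro (a | i) (b | j) hpq hpq_ne
  · have hab : f a = f b := Fin.castSucc_injective m hpq
    refine subdivide_adj_inl_inl.2 ⟨hf a b hab fun h => hpq_ne (congrArg Sum.inl h), fun h => ?_⟩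
    obtain ⟨rfl, rfl⟩ | ⟨rfl, rfl⟩ := Sym2.eq_iff.1 h
    · exact hne hab
    · exact hne hab.symm
  · exact absurd hpq (Fin.castSucc_ne_last _)
  · exact absurd hpq.symm (Fin.castSucc_ne_last _)
  · exact subdivide_adj_inr_inr.2 fun h => hpq_ne (congrArg Sum.inr h)

theorem IsFrozenCliquePartition.extendPartition_subdivide {F : V → Fin m}
    (hF : IsFrozenCliquePartition H F) (hxy : H.Adj x y) (hne : F x ≠ F y) :
    IsFrozenCliquePartition (subdivide H x y) (extendPartition F) := by
  refine ⟨hF.1.extendPartition_subdivide hne, ?_⟩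
  rintro (a | i) j hj <;> cases j using Fin.lastCases with
  | last => ?_
  | cast j => ?_
  · obtain ⟨i, hi⟩ : ∃ i, a ≠ ![x, y] i := by
      by_contra! h
      exact hxy.ne ((h 0).symm.trans (h 1))
    exact ⟨Sum.inr i, rfl, mt subdivide_adj_inl_inr.1 hi⟩
  · obtain ⟨w, hw, haw⟩ := hF.2 a j fun h => hj (congrArg Fin.castSucc h)
    exact ⟨Sum.inl w, congrArg Fin.castSucc hw, fun h => haw (subdivide_adj_inl_inl.1 h).1⟩
  · exact absurd rfl hj
  · obtain ⟨w, hw, hwi⟩ : ∃ w, F w = j ∧ w ≠ ![x, y] i := by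
      fin_cases i
      · exact hF.exists_eq_and_ne hxy hne j
      · exact hF.exists_eq_and_ne hxy.symm hne.symm j
    exact ⟨Sum.inl w, congrArg Fin.castSucc hw, mt subdivide_adj_inr_inl.1 hwi⟩

end ExtendPartition

section SplitPartition

variable {V : Type*} [DecidableEq V] {H : SimpleGraph V} {x y : V} {m : ℕ} {F : V → Fin m}
  {j : Fin m} {p : V ⊕ Fin 2}

/-- The modification of a clique partition `F` having `{x, y}` as one of its cliques, in which this
clique is replaced by `{x, u}` and `{v, y}`, where `u = Sum.inr 0` and `v = Sum.inr 1`. The former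
keeps the label of `{x, y}`, the latter gets the new label `Fin.last m`. -/
def splitPartition (F : V → Fin m) (x y : V) : V ⊕ Fin 2 → Fin (m + 1) :=
  Sum.elim (Function.update (fun a => (F a).castSucc) y (Fin.last m))
    ![(F x).castSucc, Fin.last m]

theorem splitPartition_eq_last :
    splitPartition F x y p = Fin.last m ↔ p = Sum.inl y ∨ p = Sum.inr 1 := by
  obtain a | i := p
  · by_cases ha : a = y <;> simp [splitPartition, ha]
  · fin_cases i <;> simp [splitPartition]

theorem splitPartition_eq_castSucc_self (hne : x ≠ y) (hcell : ∀ z, F z = F x ↔ z = x ∨ z = y) :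
    splitPartition F x y p = (F x).castSucc ↔ p = Sum.inl x ∨ p = Sum.inr 0 := by
  obtain a | i := p
  · by_cases ha : a = y
    · simp [splitPartition, ha, hne.symm, (Fin.castSucc_ne_last _).symm]
    · simp [splitPartition, ha, hcell]
  · fin_cases i <;> simp [splitPartition, (Fin.castSucc_ne_last _).symm]

theorem splitPartition_eq_castSucc_of_ne (hxy : F x = F y) (hj : j ≠ F x) :
    splitPartition F x y p = j.castSucc ↔ ∃ a, F a = j ∧ p = Sum.inl a := by
  obtain a | i := p
  · by_cases ha : a = y
    · simp [splitPartition, ha, ← hxy, hj.symm, (Fin.castSucc_ne_last _).symm]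
    · simp [splitPartition, ha]
  · fin_cases i <;> simp [splitPartition, hj.symm, (Fin.castSucc_ne_last _).symm]

theorem IsCliquePartition.splitPartition_subdivide (hF : IsCliquePartition H F) (hne : x ≠ y)
    (hcell : ∀ z, F z = F x ↔ z = x ∨ z = y) :
    IsCliquePartition (subdivide H x y) (splitPartition F x y) := by
  have hFxy : F x = F y := ((hcell y).2 (Or.inr rfl)).symm
  intro p q hpq hpq_ne
  cases hq : splitPartition F x y q using Fin.lastCases with
  | last =>
    obtain rfl | rfl := splitPartition_eq_last.1 (hpq.trans hq) <;>
    obtain rfl | rfl := splitPartition_eq_last.1 hq <;>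
    first
    | exact absurd rfl hpq_ne
    | simp [subdivide_adj_inl_inr, subdivide_adj_inr_inl]
  | cast j =>
    by_cases hj : j = F x
    · subst hj
      obtain rfl | rfl := (splitPartition_eq_castSucc_self hne hcell).1 (hpq.trans hq) <;>
      obtain rfl | rfl := (splitPartition_eq_castSucc_self hne hcell).1 hq <;>
      first
      | exact absurd rfl hpq_ne
      | simp [subdivide_adj_inl_inr, subdivide_adj_inr_inl]
    · obtain ⟨a, ha, rfl⟩ := (splitPartition_eq_castSucc_of_ne hFxy hj).1 (hpq.trans hq)
      obtain ⟨b, hb, rfl⟩ := (splitPartition_eq_castSucc_of_ne hFxy hj).1 hq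
      refine subdivide_adj_inl_inl.2
        ⟨hF a b (ha.trans hb.symm) fun h => hpq_ne (congrArg Sum.inl h), fun h => hj ?_⟩
      obtain ⟨rfl, -⟩ | ⟨-, rfl⟩ := Sym2.eq_iff.1 h
      exacts [ha.symm, hb.symm]

theorem IsFrozenCliquePartition.splitPartition_subdivide (hF : IsFrozenCliquePartition H F)
    (hne : x ≠ y) (hcell : ∀ z, F z = F x ↔ z = x ∨ z = y) :
    IsFrozenCliquePartition (subdivide H x y) (splitPartition F x y) := by
  have hFxy : F x = F y := ((hcell y).2 (Or.inr rfl)).symm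
  refine ⟨hF.1.splitPartition_subdivide hne hcell, fun p j hj => ?_⟩
  cases j using Fin.lastCases with
  | last =>
    have hp := mt splitPartition_eq_last.2 hj.symm
    obtain a | i := p
    · refine ⟨Sum.inr 1, splitPartition_eq_last.2 (Or.inr rfl), fun h => hp (Or.inl ?_)⟩
      exact congrArg Sum.inl (subdivide_adj_inl_inr.1 h)
    · refine ⟨Sum.inl y, splitPartition_eq_last.2 (Or.inl rfl), fun h => ?_⟩
      fin_cases i
      · exact hne (subdivide_adj_inr_inl.1 h).symm
      · exact hp (Or.inr rfl)
  | cast j =>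
    by_cases hjx : j = F x
    · subst hjx
      have hlabel {q} := splitPartition_eq_castSucc_self (p := q) hne hcell
      have hp := mt hlabel.2 hj.symm
      obtain a | i := p
      · refine ⟨Sum.inr 0, hlabel.2 (Or.inr rfl), fun h => hp (Or.inl ?_)⟩
        exact congrArg Sum.inl (subdivide_adj_inl_inr.1 h)
      · refine ⟨Sum.inl x, hlabel.2 (Or.inl rfl), fun h => ?_⟩
        fin_cases i
        · exact hp (Or.inr rfl)
        · exact hne (subdivide_adj_inr_inl.1 h)
    · have hlabel {q} := splitPartition_eq_castSucc_of_ne (p := q) hFxy hjx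
      obtain a | i := p
      · obtain ⟨w, hw, haw⟩ := hF.2 a j fun h => hj (hlabel.2 ⟨a, h.symm, rfl⟩).symm
        exact ⟨Sum.inl w, hlabel.2 ⟨w, hw, rfl⟩, fun h => haw (subdivide_adj_inl_inl.1 h).1⟩
      · obtain ⟨w, hw, -⟩ := hF.2 x j hjx
        refine ⟨Sum.inl w, hlabel.2 ⟨w, hw, rfl⟩, fun h => hjx ?_⟩
        rw [← hw, hcell, subdivide_adj_inr_inl.1 h]
        fin_cases i <;> simp

end SplitPartition

section ContractPartition

variable {V : Type*} {H : SimpleGraph V} {x y : V} {m : ℕ} {g : V ⊕ Fin 2 → Fin m}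

/-- The labelling of the old vertices induced by a clique partition `g` of a subdivided graph,
except that an old vertex in the clique of `v = Sum.inr 1` is moved to the clique of
`u = Sum.inr 0`. The label of `v` thereby becomes free. -/
def contractPartition (g : V ⊕ Fin 2 → Fin m) (a : V) : Fin m :=
  if g (Sum.inl a) = g (Sum.inr 1) then g (Sum.inr 0) else g (Sum.inl a)

theorem IsCliquePartition.eq_of_label_eq_inr (hg : IsCliquePartition (subdivide H x y) g)
    {a : V} {i : Fin 2} (h : g (Sum.inl a) = g (Sum.inr i)) : a = ![x, y] i :=
  subdivide_adj_inl_inr.1 (hg _ _ h Sum.inl_ne_inr)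

theorem IsCliquePartition.contractPartition_ne (hg : IsCliquePartition (subdivide H x y) g)
    (hne : x ≠ y) (a : V) : contractPartition g a ≠ g (Sum.inr 1) := by
  unfold contractPartition
  split_ifs with hav
  · intro huv
    have hax : a = x := hg.eq_of_label_eq_inr (hav.trans huv.symm)
    have hay : a = y := hg.eq_of_label_eq_inr hav
    exact hne (hax.symm.trans hay)
  · exact hav

theorem IsCliquePartition.contractPartition_of_subdivide
    (hg : IsCliquePartition (subdivide H x y) g) (hxy : H.Adj x y) :
    IsCliquePartition H (contractPartition g) := by
  intro a b hab hne
  unfold contractPartition at hab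
  split_ifs at hab with hav hbv hbv
  · exact absurd ((hg.eq_of_label_eq_inr hav).trans (hg.eq_of_label_eq_inr hbv).symm) hne
  · have hay : a = y := hg.eq_of_label_eq_inr hav
    have hbx : b = x := hg.eq_of_label_eq_inr hab.symm
    exact hay ▸ hbx ▸ hxy.symm
  · have hax : a = x := hg.eq_of_label_eq_inr hab
    have hby : b = y := hg.eq_of_label_eq_inr hbv
    exact hax ▸ hby ▸ hxy
  · exact (subdivide_adj_inl_inl.1 (hg _ _ hab (Sum.inl_injective.ne hne))).1

theorem IsCliquePartition.cliquePartNum_lt_of_subdivide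
    (hg : IsCliquePartition (subdivide H x y) g) (hxy : H.Adj x y) : cliquePartNum H < m := by
  cases m with
  | zero => exact (g (Sum.inr 0)).elim0
  | succ n =>
    have hcontract := hg.contractPartition_of_subdivide hxy
    exact Nat.lt_succ_of_le <|
      hcontract.cliquePartNum_le_of_forall_ne (hg.contractPartition_ne hxy.ne)

theorem IsCliquePartition.cliquePartNum_subdivide {f : V → Fin (cliquePartNum H)}
    (hf : IsCliquePartition H f) (hxy : H.Adj x y) (hne : f x ≠ f y) :
    cliquePartNum (subdivide H x y) = cliquePartNum H + 1 := by
  have hext := hf.extendPartition_subdivide hne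
  obtain ⟨g, hg⟩ := exists_isCliquePartition_cliquePartNum hext
  exact le_antisymm (cliquePartNum_le hext) (hg.cliquePartNum_lt_of_subdivide hxy)

end ContractPartition

section FourCycles

variable {V : Type*} {G H : SimpleGraph V} {x y : V}

/-- For an edge `xy` of `G`: the edge `xy` is the middle edge of a diamond in `G`. -/
def IsDiamondMiddle (G : SimpleGraph V) (x y : V) : Prop :=
  ∃ r s : V, r ≠ s ∧ ¬ G.Adj r s ∧ G.Adj r x ∧ G.Adj r y ∧ G.Adj s x ∧ G.Adj s y

theorem subdivide_eq_inr_of_adj_of_adj {p : V ⊕ Fin 2} {i : Fin 2}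
    (hinl : (subdivide H x y).Adj (Sum.inl (![x, y] i)) p)
    (hinr : (subdivide H x y).Adj (Sum.inr i.rev) p) : p = Sum.inr i := by
  obtain rfl | rfl := subdivide_adj_inr.1 hinr
  · refine absurd ?_ (subdivide_adj_inl_inl.1 hinl).2
    fin_cases i <;> simp [Sym2.eq_swap]
  · rw [Fin.rev_rev]

theorem subdivide_exists_eq_inl_of_four_cycle {a b c d : V ⊕ Fin 2} (hac : a ≠ c) (hbd : b ≠ d)
    (hab : (subdivide H x y).Adj a b) (hbc : (subdivide H x y).Adj b c)
    (hcd : (subdivide H x y).Adj c d) (hda : (subdivide H x y).Adj d a) :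
    ∃ a', a = Sum.inl a' := by
  obtain a | i := a
  · exact ⟨a, rfl⟩
  · obtain rfl | rfl := subdivide_adj_inr.1 hab <;>
    obtain rfl | rfl := subdivide_adj_inr.1 hda.symm
    · exact absurd rfl hbd
    · exact absurd (subdivide_eq_inr_of_adj_of_adj hbc hcd.symm).symm hac
    · exact absurd (subdivide_eq_inr_of_adj_of_adj hcd.symm hbc).symm hac
    · exact absurd rfl hbd

theorem not_adj_of_four_cycle_of_not_subdivide_adj {a b c d : V} (hbd : b ≠ d)
    (hab : H.Adj a b) (hbc : H.Adj b c) (hcd : H.Adj c d) (hda : H.Adj d a)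
    (hac' : ¬ (subdivide H x y).Adj (Sum.inl a) (Sum.inl c))
    (hbd' : ¬ (subdivide H x y).Adj (Sum.inl b) (Sum.inl d))
    (hmid : ¬ IsDiamondMiddle H x y) : ¬ H.Adj a c := by
  intro hac
  have hxy : s(a, c) = s(x, y) := by
    by_contra h
    exact hac' (subdivide_adj_inl_inl.2 ⟨hac, h⟩)
  have hbd_ne : s(b, d) ≠ s(x, y) := by
    rw [← hxy, Ne, Sym2.eq_iff]
    rintro (⟨h, -⟩ | ⟨-, h⟩)
    exacts [hab.ne h.symm, hda.ne h]
  have hbd_adj : ¬ H.Adj b d := fun h => hbd' (subdivide_adj_inl_inl.2 ⟨h, hbd_ne⟩)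
  refine hmid ?_
  obtain ⟨rfl, rfl⟩ | ⟨rfl, rfl⟩ := Sym2.eq_iff.1 hxy
  · exact ⟨b, d, hbd, hbd_adj, hab.symm, hbc, hda, hcd.symm⟩
  · exact ⟨b, d, hbd, hbd_adj, hbc, hab.symm, hcd.symm, hda⟩

theorem c4Free_subdivide (hH : C4Free H) (hmid : ¬ IsDiamondMiddle H x y) :
    C4Free (subdivide H x y) := by
  rintro ⟨a, b, c, d, hac, hbd, hab, hbc, hcd, hda, hac', hbd'⟩
  obtain ⟨a, rfl⟩ := subdivide_exists_eq_inl_of_four_cycle hac hbd hab hbc hcd hda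
  obtain ⟨b, rfl⟩ := subdivide_exists_eq_inl_of_four_cycle hbd hac.symm hbc hcd hda hab
  obtain ⟨c, rfl⟩ := subdivide_exists_eq_inl_of_four_cycle hac.symm hbd.symm hcd hda hab hbc
  obtain ⟨d, rfl⟩ := subdivide_exists_eq_inl_of_four_cycle hbd.symm hac hda hab hbc hcd
  replace hac : a ≠ c := ne_of_apply_ne Sum.inl hac
  replace hbd : b ≠ d := ne_of_apply_ne Sum.inl hbd
  replace hab := (subdivide_adj_inl_inl.1 hab).1
  replace hbc := (subdivide_adj_inl_inl.1 hbc).1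
  replace hcd := (subdivide_adj_inl_inl.1 hcd).1
  replace hda := (subdivide_adj_inl_inl.1 hda).1
  exact hH ⟨a, b, c, d, hac, hbd, hab, hbc, hcd, hda,
    not_adj_of_four_cycle_of_not_subdivide_adj hbd hab hbc hcd hda hac' hbd' hmid,
    not_adj_of_four_cycle_of_not_subdivide_adj hac.symm hbc hcd hda hab hbd'
      (mt SimpleGraph.Adj.symm hac') hmid⟩

theorem IsFrozenCliquePartition.not_isDiamondMiddle {m : ℕ} {F : V → Fin m}
    (hF : IsFrozenCliquePartition G F) (hcell : ∀ z, F z = F x ↔ z = x ∨ z = y) :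
    ¬ IsDiamondMiddle G x y :=
  fun ⟨_, _, _, _, hrx, hry, _, _⟩ => hF.not_adj_of_adj hcell hrx hry

end FourCycles

theorem stmt18_general {V : Type*} {H : SimpleGraph V} {k m : ℕ}
    {f : V → Fin k} (hf : IsCliquePartition H f)
    {F : V → Fin m} (hF : IsFrozenCliquePartition H F)
    {x y : V} (hxy : H.Adj x y) (hfxy : f x ≠ f y)
    (hcase : F x ≠ F y ∨ (F x = F y ∧ ∀ z : V, F z = F x → z = x ∨ z = y)) :
    (∃ g : (V ⊕ Fin 2) → Fin (k + 1), IsCliquePartition (subdivide H x y) g) ∧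
    (∃ g : (V ⊕ Fin 2) → Fin (m + 1), IsFrozenCliquePartition (subdivide H x y) g) ∧
    (cliquePartNum H = k → cliquePartNum (subdivide H x y) = k + 1) ∧
    (C4Free H → (F x ≠ F y → ¬ IsDiamondMiddle H x y) → C4Free (subdivide H x y)) := by
  classical
  replace hcase : F x ≠ F y ∨ ∀ z, F z = F x ↔ z = x ∨ z = y :=
    hcase.imp_right fun ⟨hFxy, hcell⟩ z => ⟨hcell z, by rintro (rfl | rfl); exacts [rfl, hFxy.symm]⟩
  refine ⟨⟨_, hf.extendPartition_subdivide hfxy⟩, ?_, ?_, fun hH hmid => c4Free_subdivide hH ?_⟩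
  · obtain hne | hcell := hcase
    · exact ⟨_, hF.extendPartition_subdivide hxy hne⟩
    · exact ⟨_, hF.splitPartition_subdivide hxy.ne hcell⟩
  · rintro rfl
    exact hf.cliquePartNum_subdivide hxy hfxy
  · exact hcase.elim hmid hF.not_isDiamondMiddle

/-- subdividing an edge `xy` of a graph `H` having a `k`-clique-partition
and a frozen `(k+1)`-clique-partition (with `x`, `y` in different cliques of the former,
and either in different cliques of the latter, or forming together a clique of the
latter) yields a graph with a `(k+1)`-clique-partition and a frozen
`(k+2)`-clique-partition; moreover `θ` increases from `k` to `k+1`, and `C₄`-freeness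
is preserved (provided, in case (1), that `xy` is not the middle edge of a diamond). -/
theorem stmt18 {V : Type*} [Fintype V] [DecidableEq V] (H : SimpleGraph V) (k : ℕ)
    (f : V → Fin k) (hf : IsCliquePartition H f)
    (F : V → Fin (k+1)) (hF : IsFrozenCliquePartition H F)
    (x y : V) (hxy : H.Adj x y) (hfxy : f x ≠ f y)
    (hcase : F x ≠ F y ∨ (F x = F y ∧ ∀ z : V, F z = F x → z = x ∨ z = y)) :
    (∃ g : (V ⊕ Fin 2) → Fin (k+1), IsCliquePartition (subdivide H x y) g) ∧
    (∃ g : (V ⊕ Fin 2) → Fin (k+2), IsFrozenCliquePartition (subdivide H x y) g) ∧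
    (cliquePartNum H = k → cliquePartNum (subdivide H x y) = k + 1) ∧
    (C4Free H →
      (F x ≠ F y →
        ¬ ∃ r s : V, r ≠ s ∧ ¬ H.Adj r s ∧ H.Adj r x ∧ H.Adj r y ∧ H.Adj s x ∧ H.Adj s y) →
      C4Free (subdivide H x y)) :=
  stmt18_general hf hF hxy hfxy hcase
end
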